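/- Let G be a finite graph with vertex set V, let P be a hereditary property on G, and let W ⊆ V. Then the number of maximal P-subgraphs of G[W] is at most the number of maximal P-subgraphs of G, i.e., |MaxSol_P(G[W])| ≤ |MaxSol_P(G)|. -/

import Mathlib

/-- `S` is a maximal `P`-subgraph of `G[W]`: `S ⊆ W`, `P S` holds, and no `T`
with `S ⊊ T ⊆ W` satisfies `P`. -/
def MaximalPIn {V : Type*} (P : Set V → Prop) (W S : Set V) : Prop :=
  S ⊆ W ∧ P S ∧ ∀ T : Set V, S ⊂ T → T ⊆ W → ¬ P T

/-!
By finiteness, every maximal `P`-subgraph `S` of `G[W]` extends to a maximal `P`-subgraph `M` of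
`G`. By heredity `M ∩ W` is a `P`-subgraph of `G[W]`, and it contains `S`, so `M ∩ W = S` by
maximality. Thus `M ↦ M ∩ W` hits every maximal `P`-subgraph of `G[W]`.
-/

open scoped Cardinal

section

variable {V : Type*} {P : Set V → Prop} {U W S M : Set V}

theorem maximalPIn_iff_maximal : MaximalPIn P W S ↔ Maximal (fun T => T ⊆ W ∧ P T) S := by
  simp only [MaximalPIn, Set.maximal_iff_forall_ssuperset, not_and, and_assoc]

theorem exists_maximalPIn_superset (hfin : {T | T ⊆ U ∧ P T}.Finite) (hSU : S ⊆ U) (hS : P S) :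
    ∃ M, S ⊆ M ∧ MaximalPIn P U M := by
  simpa only [maximalPIn_iff_maximal, Set.mem_ofPred_eq] using hfin.exists_le_maximal ⟨hSU, hS⟩

theorem MaximalPIn.inter_eq_of_subset (hered : ∀ S T : Set V, P S → T ⊆ S → P T)
    (hS : MaximalPIn P W S) (hM : P M) (hSM : S ⊆ M) : M ∩ W = S := by
  have hMW : P (M ∩ W) := hered M (M ∩ W) hM Set.inter_subset_left
  have hle : S ⊆ M ∩ W := Set.subset_inter hSM hS.1
  exact ((maximalPIn_iff_maximal.mp hS).eq_of_subset ⟨Set.inter_subset_right, hMW⟩ hle).symm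

theorem setOf_maximalPIn_subset_image_inter (hered : ∀ S T : Set V, P S → T ⊆ S → P T)
    (hext : ∀ S, MaximalPIn P W S → ∃ M, S ⊆ M ∧ MaximalPIn P U M) :
    {S | MaximalPIn P W S} ⊆ (· ∩ W) '' {M | MaximalPIn P U M} := by
  intro S hS
  obtain ⟨M, hSM, hM⟩ := hext S hS
  exact ⟨M, hM, hS.inter_eq_of_subset hered hM.2.1 hSM⟩

end

theorem card_maxSol_restriction_le_general {V : Type*} (P : Set V → Prop)
    (hered : ∀ S T : Set V, P S → T ⊆ S → P T) (U W : Set V)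
    (hext : ∀ S, MaximalPIn P W S → ∃ M, S ⊆ M ∧ MaximalPIn P U M) :
    #{S | MaximalPIn P W S} ≤ #{M | MaximalPIn P U M} :=
  (Cardinal.mk_le_mk_of_subset (setOf_maximalPIn_subset_image_inter hered hext)).trans
    Cardinal.mk_image_le

/-- for a hereditary property `P` on a finite graph `G` and any
`W ⊆ V`, the number of maximal `P`-subgraphs of `G[W]` is at most the number
of maximal `P`-subgraphs of `G`. -/
theorem card_maxSol_restriction_le {V : Type*} [Fintype V] (G : SimpleGraph V)
    (P : Set V → Prop) (hered : ∀ S T : Set V, P S → T ⊆ S → P T)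
    (W : Set V) :
    {S : Set V | MaximalPIn P W S}.ncard ≤
      {S : Set V | MaximalPIn P Set.univ S}.ncard := by
  have hmk := card_maxSol_restriction_le_general P hered Set.univ W fun S hS =>
    exists_maximalPIn_superset (Set.toFinite _) S.subset_univ hS.2.1
  exact Cardinal.toNat_le_toNat hmk (Cardinal.lt_aleph0_of_finite _)
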